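/- Let τ be a first-order language and suppose T* is a model companion of the τ-theory T. Then: (1) T* is axiomatized by its Π₂ consequences, i.e. a τ-structure models T* if and only if it satisfies every Π₂ τ-sentence that is a consequence of T*; and (2) T* is the unique model companion of T, and indeed the unique model-complete τ-theory S with S_∀ = T_∀ up to having the same models: if S is any model-complete τ-theory with S_∀ = T_∀, then S and T* have exactly the same models. -/

import Mathlib

open FirstOrder FirstOrder.Language

universe u v

namespace ModelCompanionship

variable {L : FirstOrder.Language.{u, v}}

/-- Iterated existential quantification over the last `k` bound variables. -/
def exsN {α : Type*} : ∀ {n k : ℕ}, L.BoundedFormula α (n + k) → L.BoundedFormula α n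
  | _, 0, φ => φ
  | _, _ + 1, φ => exsN φ.ex

/-- A sentence is universal (Π₁) if it is the universal closure of a
quantifier-free formula. -/
def IsUniversalSentence (φ : L.Sentence) : Prop :=
  ∃ (n : ℕ) (ψ : L.BoundedFormula Empty n), ψ.IsQF ∧ φ = ψ.alls

/-- A sentence is Π₂ if it is of the form `∀ x⃗ ∃ y⃗ φ` with `φ` quantifier-free. -/
def IsPi2Sentence (φ : L.Sentence) : Prop :=
  ∃ (m k : ℕ) (ψ : L.BoundedFormula Empty (m + k)), ψ.IsQF ∧ φ = (exsN ψ).alls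

/-- A formula is existential if it is the existential closure of a
quantifier-free formula. -/
def IsExistentialFormula {α : Type*} (φ : L.Formula α) : Prop :=
  ∃ (n : ℕ) (ψ : L.BoundedFormula α n), ψ.IsQF ∧ φ = ψ.exs

/-- A formula is universal if it is the universal closure of a
quantifier-free formula. -/
def IsUniversalFormula {α : Type*} (φ : L.Formula α) : Prop :=
  ∃ (n : ℕ) (ψ : L.BoundedFormula α n), ψ.IsQF ∧ φ = ψ.alls

/-- A bundled nonempty `L`-structure (with domain in universe `max u v`). -/
structure BStruc (L : FirstOrder.Language.{u, v}) where
  carrier : Type (max u v)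
  [str : L.Structure carrier]
  [nonempty' : Nonempty carrier]

instance (N : BStruc L) : L.Structure N.carrier := N.str

instance (N : BStruc L) : Nonempty N.carrier := N.nonempty'

/-- `φ` is a semantic consequence of `T`: it holds in every (nonempty) model of `T`. -/
def Consequence (T : L.Theory) (φ : L.Sentence) : Prop :=
  ∀ M : BStruc L, M.carrier ⊨ T → M.carrier ⊨ φ

/-- A formula with free variables is a semantic consequence of `T` if its universal
closure holds in every (nonempty) model of `T`. -/
def FormulaConsequence {α : Type*} (T : L.Theory) (φ : L.Formula α) : Prop :=
  ∀ M : BStruc L, M.carrier ⊨ T → ∀ v : α → M.carrier, φ.Realize v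

/-- `T_∀`: the set of universal sentences which are consequences of `T`. -/
def univConsequences (T : L.Theory) : L.Theory :=
  {φ | IsUniversalSentence φ ∧ Consequence T φ}

/-- A theory is complete if it is satisfiable and decides every sentence. -/
def IsCompleteTheory (T : L.Theory) : Prop :=
  T.IsSatisfiable ∧ ∀ φ : L.Sentence, Consequence T φ ∨ Consequence T φ.not

/-- A theory is Π₁-complete if it is satisfiable and decides every universal sentence. -/
def Pi1Complete (T : L.Theory) : Prop :=
  T.IsSatisfiable ∧ ∀ φ : L.Sentence, IsUniversalSentence φ →
    (Consequence T φ ∨ Consequence T φ.not)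

/-- An embedding is Σ₁-elementary (`M ≺₁ N`) if it reflects existential formulas
with parameters in the domain. -/
def Sigma1Elementary {M : Type*} {N : Type*} [L.Structure M] [L.Structure N]
    (j : M ↪[L] N) : Prop :=
  ∀ (n : ℕ) (φ : L.Formula (Fin n)), IsExistentialFormula φ →
    ∀ a : Fin n → M, φ.Realize (fun i => j (a i)) → φ.Realize a

/-- An embedding is elementary if it preserves and reflects all first-order formulas. -/
def ElementaryEmb {M : Type*} {N : Type*} [L.Structure M] [L.Structure N]
    (j : M ↪[L] N) : Prop :=
  ∀ (n : ℕ) (φ : L.Formula (Fin n)) (a : Fin n → M),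
    φ.Realize (fun i => j (a i)) ↔ φ.Realize a

/-- `M` is `T`-existentially closed: it embeds into a model of `T` and every
embedding of `M` into a model of `T` is Σ₁-elementary. -/
def IsEC (T : L.Theory) (M : Type*) [L.Structure M] : Prop :=
  (∃ N : BStruc L, N.carrier ⊨ T ∧ Nonempty (M ↪[L] N.carrier)) ∧
  ∀ N : BStruc L, N.carrier ⊨ T → ∀ j : M ↪[L] N.carrier, Sigma1Elementary j

/-- A theory is model complete if every embedding between its models is elementary. -/
def ModelComplete (T : L.Theory) : Prop :=
  ∀ M N : BStruc L, M.carrier ⊨ T → N.carrier ⊨ T →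
    ∀ j : M.carrier ↪[L] N.carrier, ElementaryEmb j

/-- `Tstar` is the model companion of `T`. -/
def IsModelCompanion (T Tstar : L.Theory) : Prop :=
  (∀ M : BStruc L, M.carrier ⊨ T →
    ∃ N : BStruc L, N.carrier ⊨ Tstar ∧ Nonempty (M.carrier ↪[L] N.carrier)) ∧
  (∀ M : BStruc L, M.carrier ⊨ Tstar →
    ∃ N : BStruc L, N.carrier ⊨ T ∧ Nonempty (M.carrier ↪[L] N.carrier)) ∧
  ModelComplete Tstar

/-!
A model `M` of the Π₂ consequences of `T` has, by compactness, a Σ₁-elementary embedding into a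
model `N` of `T`. If `T` is model complete, every first-order fact about a tuple of `N` already
follows, modulo `T`, from a quantifier-free fact about finitely many elements of `N`, again by
compactness. Σ₁-elementarity moves the elements outside `M` into `M` while keeping that
quantifier-free fact, so witnesses of formulas over `M` can be found in `M`; by the Tarski–Vaught
test `M ≺ N`, hence `M ⊨ T`.

If `S` and `T` are model complete with `S_∀ = T_∀`, a model `M` of `S` lies in a model `N` of `T`
which lies in a model `P` of `S`. Since `M ≺ P`, the inclusion of `M` in `N` is Σ₁-elementary, and
the same argument gives `M ⊨ T`.
-/

section QuantifierFree

variable {α β : Type*} {M N : Type*} [L.Structure M] [L.Structure N]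

theorem isQF_restrictFreeVar [DecidableEq α] {n : ℕ} {φ : L.BoundedFormula α n} (hφ : φ.IsQF)
    (f : φ.freeVarFinset → β) : (φ.restrictFreeVar f).IsQF := by
  induction hφ with
  | falsum => exact .falsum
  | of_isAtomic hA =>
    cases hA with
    | equal => exact (BoundedFormula.IsAtomic.equal _ _).isQF
    | rel => exact (BoundedFormula.IsAtomic.rel _ _).isQF
  | imp _ _ ih₁ ih₂ => exact (ih₁ _).imp (ih₂ _)

theorem isQF_toFormula {n : ℕ} {φ : L.BoundedFormula α n} (hφ : φ.IsQF) : φ.toFormula.IsQF := by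
  induction hφ with
  | falsum => exact .falsum
  | of_isAtomic hA =>
    cases hA with
    | equal => exact (BoundedFormula.IsAtomic.equal _ _).isQF
    | rel => exact (BoundedFormula.IsAtomic.rel _ _).isQF
  | imp _ _ ih₁ ih₂ => exact ih₁.imp ih₂

theorem isExistentialFormula_iExs {θ : L.Formula (α ⊕ β)} [Finite β] (hθ : θ.IsQF) :
    IsExistentialFormula (θ.iExs β) :=
  ⟨_, _, hθ.relabel _, rfl⟩

theorem realize_comp_embedding_iff {θ : L.Formula α} (hθ : θ.IsQF) (j : M ↪[L] N) (v : α → M) :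
    θ.Realize (j ∘ v) ↔ θ.Realize v := by
  rw [Formula.Realize, Formula.Realize, ← hθ.realize_embedding j,
    Subsingleton.elim (j ∘ (default : Fin 0 → M)) default]

variable (L M) in
/-- The diagram of `M`: the quantifier-free formulas that hold in `M` when each element of `M`,
used as a variable, is interpreted by itself. Elements serve as variables, rather than as new
constant symbols, so that no change of language is involved. -/
def qfDiagram : Set (L.Formula M) :=
  {θ | θ.IsQF ∧ θ.Realize id}

theorem exists_embedding_coe_eq {w : M → N} (hw : ∀ θ ∈ qfDiagram L M, θ.Realize w) :
    ∃ j : M ↪[L] N, ⇑j = w := by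
  have realize_iff {θ : L.Formula M} (hθ : θ.IsQF) : θ.Realize w ↔ θ.Realize id :=
    ⟨fun hN => by_contra fun hM => hw θ.not ⟨hθ.not, hM⟩ hN, fun hM => hw θ ⟨hθ, hM⟩⟩
  refine ⟨⟨⟨w, fun x y hxy => ?_⟩, fun f x => ?_, fun r x => ?_⟩, rfl⟩
  · simpa [hxy] using
      realize_iff (θ := (Term.var x).equal (Term.var y)) (BoundedFormula.IsAtomic.equal _ _).isQF
  · simpa [eq_comm, Function.comp_def] using
      realize_iff
        (θ := (Term.func f fun i => Term.var (x i)).equal (Term.var (Structure.funMap f x)))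
        (BoundedFormula.IsAtomic.equal _ _).isQF
  · simpa [Function.comp_def] using
      realize_iff (θ := r.formula fun i => Term.var (x i)) (BoundedFormula.IsAtomic.rel _ _).isQF

end QuantifierFree

section FiniteSupport

universe w

variable {α β : Type*}

theorem exists_isQF_fin_realize_iff {θ : L.Formula α} (hθ : θ.IsQF) :
    ∃ (n : ℕ) (e : Fin n ↪ α) (θ' : L.Formula (Fin n)), θ'.IsQF ∧
      ∀ (M : Type w) [L.Structure M] (v : α → M), θ'.Realize (v ∘ e) ↔ θ.Realize v := by
  classical
  let e := θ.freeVarFinset.equivFin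
  exact ⟨_, e.symm.toEmbedding.trans (.subtype _), θ.restrictFreeVar e,
    isQF_restrictFreeVar hθ _, fun M _ v => BoundedFormula.realize_restrictFreeVar v (by simp)⟩

theorem exists_isQF_fin_sum_realize_iff {θ : L.Formula (α ⊕ β)} (hθ : θ.IsQF) :
    ∃ (m k : ℕ) (e : Fin m ↪ α) (e' : Fin k ↪ β) (θ' : L.Formula (Fin m ⊕ Fin k)), θ'.IsQF ∧
      ∀ (M : Type w) [L.Structure M] (v : α → M) (z : β → M),
        θ'.Realize (Sum.elim (v ∘ e) (z ∘ e')) ↔ θ.Realize (Sum.elim v z) := by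
  classical
  let s := θ.freeVarFinset
  let e := s.toLeft.equivFin
  let e' := s.toRight.equivFin
  let split : s → Fin s.toLeft.card ⊕ Fin s.toRight.card
    | ⟨.inl a, ha⟩ => .inl (e ⟨a, Finset.mem_toLeft.2 ha⟩)
    | ⟨.inr b, hb⟩ => .inr (e' ⟨b, Finset.mem_toRight.2 hb⟩)
  refine ⟨_, _, e.symm.toEmbedding.trans (.subtype _), e'.symm.toEmbedding.trans (.subtype _),
    θ.restrictFreeVar split, isQF_restrictFreeVar hθ _, fun M _ v z =>
      BoundedFormula.realize_restrictFreeVar (Sum.elim v z) ?_⟩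
  rintro ⟨a | b, h⟩ <;> simp [split]

theorem realize_exsN_iff_append {M : Type*} [L.Structure M] {n k : ℕ}
    {ψ : L.BoundedFormula α (n + k)} {v : α → M} {xs : Fin n → M} :
    (exsN ψ).Realize v xs ↔ ∃ ys : Fin k → M, ψ.Realize v (Fin.append xs ys) := by
  induction k with
  | zero => simp [exsN, Unique.exists_iff, Fin.append_right_nil]
  | succ k ih =>
    simp only [exsN, ih, BoundedFormula.realize_ex, ← Fin.append_snoc]
    exact ⟨fun ⟨ys, y, h⟩ => ⟨_, h⟩, fun ⟨ys, h⟩ =>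
      ⟨Fin.init ys, ys (Fin.last k), by rwa [Fin.snoc_init_self]⟩⟩

theorem exists_isUniversalSentence_realize_iff {θ : L.Formula α} (hθ : θ.IsQF) :
    ∃ σ : L.Sentence, IsUniversalSentence σ ∧
      ∀ (M : Type w) [L.Structure M] [Nonempty M], M ⊨ σ ↔ ∀ v : α → M, θ.Realize v := by
  obtain ⟨n, e, θ', hθ', hiff⟩ := exists_isQF_fin_realize_iff.{u, v, w} hθ
  refine ⟨_, ⟨n, BoundedFormula.relabel Sum.inr θ', hθ'.relabel _, rfl⟩, fun M _ _ => ?_⟩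
  calc
    _ ↔ ∀ xs : Fin n → M, θ'.Realize xs :=
      BoundedFormula.realize_alls.trans (forall_congr' fun _ => θ'.realize_relabel_sumInr)
    _ ↔ ∀ v : α → M, θ'.Realize (v ∘ e) := e.injective.surjective_comp_right.forall
    _ ↔ ∀ v : α → M, θ.Realize v := forall_congr' (hiff M)

theorem exists_isPi2Sentence_realize_iff {θ : L.Formula (α ⊕ β)} (hθ : θ.IsQF) :
    ∃ σ : L.Sentence, IsPi2Sentence σ ∧ ∀ (M : Type w) [L.Structure M] [Nonempty M],
      M ⊨ σ ↔ ∀ v : α → M, ∃ z : β → M, θ.Realize (Sum.elim v z) := by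
  obtain ⟨m, k, e, e', θ', hθ', hiff⟩ := exists_isQF_fin_sum_realize_iff.{u, v, w} hθ
  let ψ : L.BoundedFormula Empty (m + k) :=
    BoundedFormula.relabel (n := m + k) (k := 0) (Sum.inr ∘ finSumFinEquiv) θ'
  refine ⟨_, ⟨m, k, ψ, hθ'.relabel _, rfl⟩, fun M _ _ => ?_⟩
  have realize_ψ (xs : Fin m → M) (ys : Fin k → M) :
      ψ.Realize default (Fin.append xs ys) ↔ θ'.Realize (Sum.elim xs ys) := by
    refine (BoundedFormula.realize_relabel (n := 0)).trans (iff_of_eq ?_)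
    rw [Formula.Realize]
    congr 1
    · ext (i | i) <;> simp
    · exact Subsingleton.elim _ _
  calc
    _ ↔ ∀ xs : Fin m → M, ∃ ys : Fin k → M, θ'.Realize (Sum.elim xs ys) :=
      BoundedFormula.realize_alls.trans (forall_congr' fun xs =>
        realize_exsN_iff_append.trans (exists_congr (realize_ψ xs)))
    _ ↔ ∀ v : α → M, ∃ z : β → M, θ'.Realize (Sum.elim (v ∘ e) (z ∘ e')) :=
      e.injective.surjective_comp_right.forall.trans
        (forall_congr' fun _ => e'.injective.surjective_comp_right.exists)
    _ ↔ ∀ v : α → M, ∃ z : β → M, θ.Realize (Sum.elim v z) := by simp only [hiff]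

end FiniteSupport

section Diagrams

theorem exists_model_forall_realize_of_directed {α : Type (max u v)} {ι : Type*} [Nonempty ι]
    {T : L.Theory} {δ : ι → L.Formula α}
    (directed : ∀ i j, ∃ k, ∀ (N : BStruc L) (w : α → N.carrier),
      (δ k).Realize w → (δ i).Realize w ∧ (δ j).Realize w)
    (satisfiable : ∀ i, ∃ N : BStruc L, N.carrier ⊨ T ∧ ∃ w : α → N.carrier, (δ i).Realize w) :
    ∃ N : BStruc L, N.carrier ⊨ T ∧ ∃ w : α → N.carrier, ∀ i, (δ i).Realize w := by
  -- `S i` contains all consequences of `T` and `δ i`, not only these axioms, so that the family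
  -- is directed under inclusion.
  let S (i : ι) : L[[α]].Theory := {σ | ∀ (N : BStruc L) (w : α → N.carrier),
    N.carrier ⊨ T → (δ i).Realize w → (Formula.equivSentence.symm σ).Realize w}
  have S_directed : Directed (· ⊆ ·) S := fun i j =>
    let ⟨k, hk⟩ := directed i j
    ⟨k, fun _ hσ N w hN hw => hσ N w hN (hk N w hw).1,
      fun _ hσ N w hN hw => hσ N w hN (hk N w hw).2⟩
  have S_satisfiable (i : ι) : (S i).IsSatisfiable := by
    obtain ⟨N, hN, w, hw⟩ := satisfiable i
    let := constantsOn.structure w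
    have : N.carrier ⊨ S i :=
      ⟨fun σ hσ => (Formula.realize_equivSentence_symm _ σ w).1 (hσ N w hN hw)⟩
    exact Theory.Model.isSatisfiable N.carrier
  obtain ⟨P⟩ := (Theory.isSatisfiable_directed_union_iff S_directed).2 S_satisfiable
  let := (L.lhomWithConstants α).reduct P
  have realize_of_mem {i : ι} {σ : L[[α]].Sentence} (hσ : σ ∈ S i) : P ⊨ σ :=
    P.is_model.realize_of_mem σ (Set.mem_iUnion_of_mem i hσ)
  refine ⟨⟨P⟩, ⟨fun σ hσ => ?_⟩, fun a => (L.con a : P), fun i => ?_⟩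
  · obtain ⟨i⟩ := ‹Nonempty ι›
    refine ((L.lhomWithConstants α).realize_onSentence P σ).1
      (realize_of_mem (i := i) fun N w hN _ => ?_)
    let := constantsOn.structure w
    exact (Formula.realize_equivSentence_symm _ _ w).2
      (((L.lhomWithConstants α).realize_onSentence _ σ).2 (hN.realize_of_mem σ hσ))
  · exact (Formula.realize_equivSentence P (δ i)).1
      (realize_of_mem (i := i) fun N w _ hw => by simpa using hw)

theorem exists_model_embedding_realize {T : L.Theory} {M : BStruc L} {φ : L.Formula M.carrier}
    (satisfiable : ∀ θ ∈ qfDiagram L M.carrier, ∃ N : BStruc L, N.carrier ⊨ T ∧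
      ∃ w : M.carrier → N.carrier, θ.Realize w ∧ φ.Realize w) :
    ∃ N : BStruc L, N.carrier ⊨ T ∧ ∃ j : M.carrier ↪[L] N.carrier, φ.Realize j := by
  have : Nonempty (qfDiagram L M.carrier) := ⟨⟨⊤, .top, Formula.realize_top.2 trivial⟩⟩
  obtain ⟨N, hN, w, hw⟩ := exists_model_forall_realize_of_directed (T := T)
    (δ := fun θ : qfDiagram L M.carrier => θ.1 ⊓ φ)
    (fun θ₁ θ₂ => ⟨⟨θ₁ ⊓ θ₂, θ₁.2.1.inf θ₂.2.1, Formula.realize_inf.2 ⟨θ₁.2.2, θ₂.2.2⟩⟩,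
      fun N w => by simp only [Formula.realize_inf]; tauto⟩)
    (by simpa only [Formula.realize_inf, Subtype.forall] using satisfiable)
  simp only [Formula.realize_inf] at hw
  obtain ⟨j, rfl⟩ := exists_embedding_coe_eq fun θ hθ => (hw ⟨θ, hθ⟩).1
  exact ⟨N, hN, j, (hw (Classical.arbitrary _)).2⟩

theorem models_univConsequences_iff_exists_embedding {T : L.Theory} {M : BStruc L} :
    M.carrier ⊨ univConsequences T ↔
      ∃ N : BStruc L, N.carrier ⊨ T ∧ Nonempty (M.carrier ↪[L] N.carrier) := by
  constructor
  · intro hM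
    suffices satisfiable : ∀ θ ∈ qfDiagram L M.carrier, ∃ N : BStruc L, N.carrier ⊨ T ∧
        ∃ w : M.carrier → N.carrier, θ.Realize w ∧ Formula.Realize ⊤ w by
      obtain ⟨N, hN, j, -⟩ := exists_model_embedding_realize satisfiable
      exact ⟨N, hN, ⟨j⟩⟩
    intro θ ⟨hθ, hMθ⟩
    by_contra! unsatisfiable
    obtain ⟨σ, hσ, hiff⟩ := exists_isUniversalSentence_realize_iff hθ.not
    have hMσ : M.carrier ⊨ σ := hM.realize_of_mem σ ⟨hσ, fun N hN =>
      (hiff N.carrier).2 fun w hw => unsatisfiable N hN w hw (Formula.realize_top.2 trivial)⟩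
    exact (hiff M.carrier).1 hMσ id hMθ
  · rintro ⟨N, hN, ⟨j⟩⟩
    refine ⟨?_⟩
    rintro _ ⟨⟨n, ψ, hψ, rfl⟩, hT⟩
    refine BoundedFormula.realize_alls.2 fun xs => ?_
    rw [← hψ.realize_embedding j, Subsingleton.elim (j ∘ (default : Empty → M.carrier)) default]
    exact BoundedFormula.realize_alls.1 (hT N hN) _

theorem models_univConsequences {T : L.Theory} {M : BStruc L} (hM : M.carrier ⊨ T) :
    M.carrier ⊨ univConsequences T :=
  ⟨fun _ hσ => hσ.2 M hM⟩

end Diagrams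

section SigmaOne

theorem ElementaryEmb.realize_comp_iff {M N : Type*} [L.Structure M] [L.Structure N]
    {j : M ↪[L] N} (hj : ElementaryEmb j) {α : Type*} (φ : L.Formula α) (v : α → M) :
    φ.Realize (j ∘ v) ↔ φ.Realize v :=
  ElementaryEmbedding.map_formula ⟨j, fun {n} => hj n⟩ φ v

theorem Sigma1Elementary.of_comp {M N P : Type*} [L.Structure M] [L.Structure N] [L.Structure P]
    {j : M ↪[L] N} {k : N ↪[L] P} (h : ElementaryEmb (k.comp j)) : Sigma1Elementary j := by
  rintro n _ ⟨m, ψ, hψ, rfl⟩ a hN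
  obtain ⟨ys, hys⟩ := BoundedFormula.realize_exs.1 hN
  exact (h n _ a).1 (BoundedFormula.realize_exs.2 ⟨k ∘ ys, (hψ.realize_embedding k).2 hys⟩)

universe w

variable {M N : Type w} [L.Structure M] [L.Structure N] [Nonempty M] {j : M ↪[L] N}

theorem Sigma1Elementary.exists_realize_sumElim (hj : Sigma1Elementary j) {α β : Type*}
    {θ : L.Formula (α ⊕ β)} (hθ : θ.IsQF) {v : α → M} {z : β → N}
    (h : θ.Realize (Sum.elim (j ∘ v) z)) : ∃ z' : β → M, θ.Realize (Sum.elim v z') := by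
  obtain ⟨m, k, e, e', θ', hθ', hiff⟩ := exists_isQF_fin_sum_realize_iff.{_, _, w} hθ
  have hN : (θ'.iExs (Fin k)).Realize (j ∘ v ∘ e) :=
    Formula.realize_iExs.2 ⟨z ∘ e', (hiff N _ _).2 h⟩
  obtain ⟨ys, hys⟩ := Formula.realize_iExs.1 (hj m _ (isExistentialFormula_iExs hθ') _ hN)
  obtain ⟨z', rfl⟩ := e'.injective.surjective_comp_right ys
  exact ⟨z', (hiff M _ _).1 hys⟩

theorem Sigma1Elementary.exists_leftInverse_realize (hj : Sigma1Elementary j)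
    {θ : L.Formula N} (hθ : θ ∈ qfDiagram L N) :
    ∃ r : N → M, Function.LeftInverse r j ∧ θ.Realize r := by
  let split : N → M ⊕ N := Function.extend j Sum.inl Sum.inr
  have split_apply (m : M) : split (j m) = Sum.inl m := j.injective.extend_apply _ _ m
  have elim_split : Sum.elim j id ∘ split = id := by
    funext y
    by_cases hy : ∃ m, j m = y
    · obtain ⟨m, rfl⟩ := hy
      simp [split_apply]
    · simp [split, Function.extend_apply' _ _ _ hy]
  obtain ⟨z, hz⟩ := hj.exists_realize_sumElim (v := id) (z := id) (hθ.1.relabel (Sum.inl ∘ split))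
    (Formula.realize_relabel.2 (by simpa only [Function.comp_id, elim_split] using hθ.2))
  exact ⟨Sum.elim id z ∘ split, fun m => by simp [split_apply], Formula.realize_relabel.1 hz⟩

end SigmaOne

section UniversalDiagram

variable (L) in
/-- The universal diagram of `M` with `k` universally quantified variables: the quantifier-free
formulas in variables `M ⊕ Fin k` that hold in `M` when each element of `M` is interpreted by
itself, whatever the values of the last `k` variables. The quantifier prefix `∀ z : Fin k → M` is
kept outside the formula. -/
def univDiagram (M : Type*) [L.Structure M] (k : ℕ) : Set (L.Formula (M ⊕ Fin k)) :=
  {θ | θ.IsQF ∧ ∀ z : Fin k → M, θ.Realize (Sum.elim id z)}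

theorem realize_toFormula_relabel_map {α β M : Type*} [L.Structure M] {k : ℕ}
    {ψ : L.BoundedFormula α k} {a : α → β} {v : β → M} {z : Fin k → M} :
    (ψ.toFormula.relabel (Sum.map a id)).Realize (Sum.elim v z) ↔ ψ.Realize (v ∘ a) z := by
  rw [Formula.realize_relabel, BoundedFormula.realize_toFormula, Sum.elim_comp_map,
    Sum.elim_comp_inl, Sum.elim_comp_inr, Function.comp_id]

theorem exists_sigma1Elementary_coe_eq {M N : Type*} [L.Structure M] [L.Structure N] {w : M → N}
    (hw : ∀ k, ∀ θ ∈ univDiagram L M k, ∀ z : Fin k → N, θ.Realize (Sum.elim w z)) :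
    ∃ j : M ↪[L] N, ⇑j = w ∧ Sigma1Elementary j := by
  have realize_qfDiagram (θ) (hθ : θ ∈ qfDiagram L M) : θ.Realize w := by
    have mem : θ.relabel Sum.inl ∈ univDiagram L M 0 :=
      ⟨hθ.1.relabel _, fun z => Formula.realize_relabel.2 hθ.2⟩
    simpa only [Formula.realize_relabel, Sum.elim_comp_inl] using hw 0 _ mem default
  obtain ⟨j, rfl⟩ := exists_embedding_coe_eq realize_qfDiagram
  refine ⟨j, rfl, ?_⟩
  rintro n _ ⟨k, ψ, hψ, rfl⟩ a hN
  by_contra hM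
  let θ : L.Formula (M ⊕ Fin k) := ψ.toFormula.relabel (Sum.map a id)
  have mem : θ.not ∈ univDiagram L M k := by
    refine ⟨((isQF_toFormula hψ).relabel _).not, fun z hz => hM ?_⟩
    exact BoundedFormula.realize_exs.2 ⟨z, (realize_toFormula_relabel_map (v := id)).1 hz⟩
  obtain ⟨z, hz⟩ := BoundedFormula.realize_exs.1 hN
  exact hw k _ mem z (realize_toFormula_relabel_map.2 hz)

theorem exists_mem_univDiagram_imp_and {M : BStruc L} {k₁ k₂ : ℕ}
    {θ₁ : L.Formula (M.carrier ⊕ Fin k₁)} {θ₂ : L.Formula (M.carrier ⊕ Fin k₂)}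
    (hθ₁ : θ₁ ∈ univDiagram L M.carrier k₁) (hθ₂ : θ₂ ∈ univDiagram L M.carrier k₂) :
    ∃ k, ∃ θ ∈ univDiagram L M.carrier k, ∀ (N : BStruc L) (w : M.carrier → N.carrier),
      (∀ z, θ.Realize (Sum.elim w z)) →
        (∀ z, θ₁.Realize (Sum.elim w z)) ∧ ∀ z, θ₂.Realize (Sum.elim w z) := by
  let θ : L.Formula (M.carrier ⊕ Fin (k₁ + k₂)) :=
    θ₁.relabel (Sum.map id (Fin.castAdd k₂)) ⊓ θ₂.relabel (Sum.map id (Fin.natAdd k₁))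
  have realize_θ (N : BStruc L) (w : M.carrier → N.carrier) (z : Fin (k₁ + k₂) → N.carrier) :
      θ.Realize (Sum.elim w z) ↔ θ₁.Realize (Sum.elim w (z ∘ Fin.castAdd k₂)) ∧
        θ₂.Realize (Sum.elim w (z ∘ Fin.natAdd k₁)) := by
    simp only [θ, Formula.realize_inf, Formula.realize_relabel, Sum.elim_comp_map,
      Function.comp_id]
  refine ⟨_, θ, ⟨(hθ₁.1.relabel _).inf (hθ₂.1.relabel _), fun z => ?_⟩, fun N w hw => ⟨?_, ?_⟩⟩
  · exact (realize_θ M id z).2 ⟨hθ₁.2 _, hθ₂.2 _⟩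
  · exact (Fin.castAdd_injective k₁ k₂).surjective_comp_right.forall.2
      fun z => ((realize_θ N w z).1 (hw z)).1
  · exact (Fin.natAdd_injective k₂ k₁).surjective_comp_right.forall.2
      fun z => ((realize_θ N w z).1 (hw z)).2

theorem exists_model_realize_univDiagram {T : L.Theory} {M : BStruc L}
    (hM : ∀ σ : L.Sentence, IsPi2Sentence σ → Consequence T σ → M.carrier ⊨ σ) :
    ∃ N : BStruc L, N.carrier ⊨ T ∧ ∃ w : M.carrier → N.carrier,
      ∀ k, ∀ θ ∈ univDiagram L M.carrier k, ∀ z, θ.Realize (Sum.elim w z) := by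
  let ι := Σ k, univDiagram L M.carrier k
  have : Nonempty ι := ⟨0, ⊤, .top, fun _ => Formula.realize_top.2 trivial⟩
  let δ (θ : ι) : L.Formula M.carrier := θ.2.1.iAlls (Fin θ.1)
  suffices ∃ N : BStruc L, N.carrier ⊨ T ∧ ∃ w : M.carrier → N.carrier, ∀ i, (δ i).Realize w by
    obtain ⟨N, hN, w, hw⟩ := this
    exact ⟨N, hN, w, fun k θ hθ => Formula.realize_iAlls.1 (hw ⟨k, θ, hθ⟩)⟩
  refine exists_model_forall_realize_of_directed ?_ ?_ <;> simp only [δ, Formula.realize_iAlls]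
  · rintro ⟨_, _, hθ₁⟩ ⟨_, _, hθ₂⟩
    obtain ⟨k, θ, hθ, imp_and⟩ := exists_mem_univDiagram_imp_and hθ₁ hθ₂
    exact ⟨⟨k, θ, hθ⟩, imp_and⟩
  · rintro ⟨k, θ, hθ, hMθ⟩
    by_contra! unsatisfiable
    obtain ⟨σ, hσ, hiff⟩ := exists_isPi2Sentence_realize_iff hθ.not
    have hMσ : M.carrier ⊨ σ := hM σ hσ fun N hN => (hiff N.carrier).2 (unsatisfiable N hN)
    obtain ⟨z, hz⟩ := (hiff M.carrier).1 hMσ id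
    exact hz (hMθ z)

theorem exists_model_sigma1Elementary {T : L.Theory} {M : BStruc L}
    (hM : ∀ σ : L.Sentence, IsPi2Sentence σ → Consequence T σ → M.carrier ⊨ σ) :
    ∃ N : BStruc L, N.carrier ⊨ T ∧ ∃ j : M.carrier ↪[L] N.carrier, Sigma1Elementary j := by
  obtain ⟨N, hN, w, hw⟩ := exists_model_realize_univDiagram hM
  obtain ⟨j, -, hj⟩ := exists_sigma1Elementary_coe_eq hw
  exact ⟨N, hN, j, hj⟩

end UniversalDiagram

section ModelComplete

theorem ModelComplete.exists_mem_qfDiagram_imp {T : L.Theory} (hT : ModelComplete T) {M : BStruc L}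
    (hM : M.carrier ⊨ T) {φ : L.Formula M.carrier} (hφ : φ.Realize id) :
    ∃ θ ∈ qfDiagram L M.carrier, ∀ N : BStruc L, N.carrier ⊨ T →
      ∀ w : M.carrier → N.carrier, θ.Realize w → φ.Realize w := by
  by_contra! satisfiable
  obtain ⟨N, hN, j, hj⟩ := exists_model_embedding_realize (φ := φ.not) satisfiable
  exact hj (((hT M N hM hN j).realize_comp_iff φ id).2 hφ)

theorem ModelComplete.models_of_sigma1Elementary {T : L.Theory} (hT : ModelComplete T)
    {M N : BStruc L} (hN : N.carrier ⊨ T) {j : M.carrier ↪[L] N.carrier}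
    (hj : Sigma1Elementary j) : M.carrier ⊨ T := by
  refine ((j.toElementaryEmbedding fun n φ x a hφ => ?_).theory_model_iff T).2 hN
  let φN : L.Formula N.carrier :=
    φ.toFormula.relabel (Sum.elim Empty.elim (Fin.snoc (j ∘ x) a : Fin (n + 1) → N.carrier))
  have realize_φN (w : N.carrier → N.carrier) : φN.Realize w ↔
      φ.Realize default (Fin.snoc (w ∘ j ∘ x) (w a) : Fin (n + 1) → N.carrier) := by
    rw [Formula.realize_relabel, BoundedFormula.realize_toFormula, ← Fin.comp_snoc]
    exact iff_of_eq (congrArg₂ _ (Subsingleton.elim _ _) rfl)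
  obtain ⟨θ, hθ, imp_φN⟩ := hT.exists_mem_qfDiagram_imp hN ((realize_φN id).2 hφ)
  obtain ⟨r, hr, hθr⟩ := hj.exists_leftInverse_realize hθ
  have hφr := (realize_φN (j ∘ r)).1 (imp_φN N hN _ ((realize_comp_embedding_iff hθ.1 j r).2 hθr))
  refine ⟨r a, ?_⟩
  rwa [Function.comp_assoc, ← Function.comp_assoc r, hr.comp_eq_id] at hφr

theorem ModelComplete.models_iff_forall_isPi2Sentence {T : L.Theory} (hT : ModelComplete T)
    (M : BStruc L) : M.carrier ⊨ T ↔
      ∀ σ : L.Sentence, IsPi2Sentence σ → Consequence T σ → M.carrier ⊨ σ := by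
  refine ⟨fun hM σ _ hσ => hσ M hM, fun hM => ?_⟩
  obtain ⟨N, hN, j, hj⟩ := exists_model_sigma1Elementary hM
  exact hT.models_of_sigma1Elementary hN hj

theorem ModelComplete.models_of_univConsequences_eq {S T : L.Theory} (hS : ModelComplete S)
    (hT : ModelComplete T) (h : univConsequences S = univConsequences T) {M : BStruc L}
    (hM : M.carrier ⊨ S) : M.carrier ⊨ T := by
  obtain ⟨N, hN, ⟨j⟩⟩ := models_univConsequences_iff_exists_embedding.1
    (h ▸ models_univConsequences hM)
  obtain ⟨P, hP, ⟨k⟩⟩ := models_univConsequences_iff_exists_embedding.1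
    (h.symm ▸ models_univConsequences hN)
  exact hT.models_of_sigma1Elementary hN (.of_comp (hS M P hM hP (k.comp j)))

theorem univConsequences_subset_of_forall_embedding {S T : L.Theory}
    (h : ∀ M : BStruc L, M.carrier ⊨ T →
      ∃ N : BStruc L, N.carrier ⊨ S ∧ Nonempty (M.carrier ↪[L] N.carrier)) :
    univConsequences S ⊆ univConsequences T := fun σ hσ =>
  ⟨hσ.1, fun M hM =>
    (models_univConsequences_iff_exists_embedding.2 (h M hM)).realize_of_mem σ hσ⟩

theorem IsModelCompanion.univConsequences_eq {T Tstar : L.Theory} (h : IsModelCompanion T Tstar) :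
    univConsequences Tstar = univConsequences T :=
  (univConsequences_subset_of_forall_embedding h.1).antisymm
    (univConsequences_subset_of_forall_embedding h.2.1)

end ModelComplete

/-- A model companion `T⋆` of `T` is axiomatized by its Π₂ consequences, and is the unique
model-complete theory `S` with `S_∀ = T_∀`, up to having the same models. -/
theorem modelCompanion_pi2_axiomatized_and_unique (T Tstar : L.Theory)
    (h : IsModelCompanion T Tstar) :
    (∀ M : BStruc L, (M.carrier ⊨ Tstar ↔
      ∀ ψ : L.Sentence, IsPi2Sentence ψ → Consequence Tstar ψ → M.carrier ⊨ ψ)) ∧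
    (∀ S : L.Theory, ModelComplete S → univConsequences S = univConsequences T →
      ∀ M : BStruc L, (M.carrier ⊨ S ↔ M.carrier ⊨ Tstar)) := by
  have hTstar : ModelComplete Tstar := h.2.2
  refine ⟨hTstar.models_iff_forall_isPi2Sentence, fun S hS hST M => ?_⟩
  have hSTstar : univConsequences S = univConsequences Tstar := hST.trans h.univConsequences_eq.symm
  exact ⟨hS.models_of_univConsequences_eq hTstar hSTstar,
    hTstar.models_of_univConsequences_eq hS hSTstar.symm⟩

end ModelCompanionship
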